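/- Let Q be a symmetric positive definite real d×d matrix, R a symmetric positive definite real m×m matrix, A a real d×d matrix, B a real d×m matrix, and Π a symmetric positive definite real d×d matrix solving the algebraic Riccati equation AᵀΠ + ΠA − ΠBR⁻¹BᵀΠ + Q = 0. Then the closed-loop matrix A − BR⁻¹BᵀΠ is Hurwitz: every eigenvalue μ ∈ ℂ of A − BR⁻¹BᵀΠ satisfies Re μ < 0. -/

import Mathlib

open Matrix

/-!
Write `G = B R⁻¹ Bᴴ`, so that the closed-loop matrix is `F = A - G P`. The Riccati equation says
that `P` solves the Lyapunov equation `Fᴴ P + P F = -(Q + P G P)`, whose right-hand side is negative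
definite. Pairing it with an eigenvector `F v = μ v` gives `2 (re μ) (v* P v) < 0`, and
`v* P v ≥ 0`. Real matrices are treated by viewing them as complex ones.
-/

section StarRing

variable {n R : Type*} [Fintype n]

lemma star_dotProduct_lyapunov_mulVec_of_mulVec_eq_smul [CommRing R] [StarRing R]
    {F : Matrix n n R} {μ : R} {v : n → R} (P : Matrix n n R) (hv : F *ᵥ v = μ • v) :
    star v ⬝ᵥ ((Fᴴ * P + P * F) *ᵥ v) = (star μ + μ) * (star v ⬝ᵥ (P *ᵥ v)) := by
  have left_term : star v ⬝ᵥ ((Fᴴ * P) *ᵥ v) = star μ * (star v ⬝ᵥ (P *ᵥ v)) := by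
    rw [← mulVec_mulVec, dotProduct_mulVec, ← star_mulVec, hv, star_smul, smul_dotProduct,
      smul_eq_mul]
  have right_term : star v ⬝ᵥ ((P * F) *ᵥ v) = μ * (star v ⬝ᵥ (P *ᵥ v)) := by
    rw [← mulVec_mulVec, hv, mulVec_smul, dotProduct_smul, smul_eq_mul]
  rw [add_mulVec, dotProduct_add, left_term, right_term, add_mul]

lemma lyapunov_of_riccati [Ring R] [StarRing R] {A G P Q : Matrix n n R}
    (hG : G.IsHermitian) (hP : P.IsHermitian) (hARE : Aᴴ * P + P * A - P * G * P + Q = 0) :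
    (A - G * P)ᴴ * P + P * (A - G * P) = -(Q + P * G * P) := by
  have closed_loop_conjTranspose : (A - G * P)ᴴ = Aᴴ - P * G := by
    rw [conjTranspose_sub, conjTranspose_mul, hG.eq, hP.eq]
  rw [closed_loop_conjTranspose, eq_neg_iff_add_eq_zero, ← hARE]
  noncomm_ring

lemma riccati_map {S : Type*} [Ring R] [StarRing R] [Ring S] [StarRing S] (f : R →+* S)
    (hf : Function.Semiconj f star star) {A G P Q : Matrix n n R}
    (hARE : Aᴴ * P + P * A - P * G * P + Q = 0) :
    (A.map f)ᴴ * P.map f + P.map f * A.map f - P.map f * G.map f * P.map f + Q.map f = 0 := by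
  classical
  rw [← conjTranspose_map f hf]
  simpa only [map_add, map_sub, map_mul, map_zero, RingHom.mapMatrix_apply] using
    congrArg f.mapMatrix hARE

end StarRing

section RCLike

open scoped ComplexOrder

variable {n 𝕜 : Type*} [RCLike 𝕜]

section Map

variable [Finite n] {𝕜' : Type*} [RCLike 𝕜'] {M : Matrix n n 𝕜}

open scoped MatrixOrder in
lemma posSemidef_map (f : 𝕜 →+* 𝕜') (hf : Function.Semiconj f star star) (hM : M.PosSemidef) :
    (M.map f).PosSemidef := by
  classical
  cases nonempty_fintype n
  obtain ⟨S, rfl⟩ := CStarAlgebra.nonneg_iff_eq_star_mul_self.mp hM.nonneg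
  rw [star_eq_conjTranspose, Matrix.map_mul, conjTranspose_map f hf]
  exact posSemidef_conjTranspose_mul_self (S.map f)

lemma posDef_map (f : 𝕜 →+* 𝕜') (hf : Function.Semiconj f star star) (hM : M.PosDef) :
    (M.map f).PosDef := by
  classical
  cases nonempty_fintype n
  exact (posSemidef_map f hf hM.posSemidef).posDef_iff_isUnit.mpr (hM.isUnit.map f.mapMatrix)

end Map

variable [Fintype n]

lemma re_neg_of_lyapunov {F P N : Matrix n n 𝕜} (hP : P.PosSemidef) (hN : N.PosDef)
    (hLyapunov : Fᴴ * P + P * F = -N) {μ : 𝕜} {v : n → 𝕜} (hv : v ≠ 0) (heig : F *ᵥ v = μ • v) :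
    RCLike.re μ < 0 := by
  have energy_balance :
      2 * RCLike.re μ * RCLike.re (star v ⬝ᵥ (P *ᵥ v)) = -RCLike.re (star v ⬝ᵥ (N *ᵥ v)) := by
    have h : star v ⬝ᵥ (-N *ᵥ v) = (star μ + μ) * (star v ⬝ᵥ (P *ᵥ v)) :=
      hLyapunov ▸ star_dotProduct_lyapunov_mulVec_of_mulVec_eq_smul P heig
    have hμ : star μ + μ = ((2 * RCLike.re μ : ℝ) : 𝕜) := by
      rw [RCLike.star_def, add_comm, RCLike.add_conj, RCLike.ofReal_mul, RCLike.ofReal_ofNat]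
    rw [← RCLike.re_ofReal_mul, ← hμ, ← h, neg_mulVec, dotProduct_neg, map_neg]
  have hPv : 0 ≤ RCLike.re (star v ⬝ᵥ (P *ᵥ v)) := hP.re_dotProduct_nonneg v
  have hNv : 0 < RCLike.re (star v ⬝ᵥ (N *ᵥ v)) := hN.re_dotProduct_pos hv
  exact neg_of_mul_neg_left (by linarith) hPv

theorem riccati_closed_loop_hurwitz_general {A G P Q : Matrix n n 𝕜}
    (hG : G.PosSemidef) (hP : P.PosSemidef) (hQ : Q.PosDef)
    (hARE : Aᴴ * P + P * A - P * G * P + Q = 0)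
    {μ : 𝕜} {v : n → 𝕜} (hv : v ≠ 0) (heig : (A - G * P) *ᵥ v = μ • v) :
    RCLike.re μ < 0 := by
  have hPGP : (P * G * P).PosSemidef := by
    simpa only [hP.isHermitian.eq] using hG.conjTranspose_mul_mul_same P
  exact re_neg_of_lyapunov hP (hQ.add_posSemidef hPGP)
    (lyapunov_of_riccati hG.isHermitian hP.isHermitian hARE) hv heig

end RCLike

/-- If `Q ≻ 0`, `R ≻ 0` and the symmetric positive definite matrix `Π` solves
the algebraic Riccati equation `AᵀΠ + ΠA − ΠBR⁻¹BᵀΠ + Q = 0`, then the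
closed-loop matrix `A − BR⁻¹BᵀΠ` is Hurwitz: all its complex eigenvalues have
strictly negative real part. -/
theorem riccati_closed_loop_hurwitz {d m : ℕ}
    (A : Matrix (Fin d) (Fin d) ℝ) (B : Matrix (Fin d) (Fin m) ℝ)
    (Q P : Matrix (Fin d) (Fin d) ℝ) (R : Matrix (Fin m) (Fin m) ℝ)
    (hQ : Q.PosDef) (hR : R.PosDef) (hP : P.PosDef)
    (hARE : Aᵀ * P + P * A - P * B * R⁻¹ * Bᵀ * P + Q = 0)
    (μ : ℂ) (v : Fin d → ℂ) (hv : v ≠ 0)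
    (heig : ((A - B * R⁻¹ * Bᵀ * P).map (Complex.ofReal)).mulVec v = μ • v) :
    μ.re < 0 := by
  have hstar : Function.Semiconj Complex.ofRealHom star star :=
    fun x => (Complex.conj_ofReal x).symm
  have hG : (B * R⁻¹ * Bᵀ).PosSemidef := hR.posSemidef.inv.mul_mul_conjTranspose_same B
  have hARE' : Aᴴ * P + P * A - P * (B * R⁻¹ * Bᵀ) * P + Q = 0 := by
    simpa only [conjTranspose_eq_transpose_of_trivial, Matrix.mul_assoc] using hARE
  refine riccati_closed_loop_hurwitz_general (posSemidef_map _ hstar hG)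
    (posSemidef_map _ hstar hP.posSemidef) (posDef_map _ hstar hQ) (riccati_map _ hstar hARE') hv ?_
  rw [← Matrix.map_mul, ← Matrix.map_sub _ (map_sub _)]
  exact heig
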